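/- Let m ≥ 2 be a positive integer that is not a power of 2. Then the difference graph of the generalized quaternion group Q_{4m} of order 4m is isomorphic (as a graph) to the difference graph of the cyclic group Z_{2m}. -/

import Mathlib

/-- Adjacency in the difference of the enhanced power graph and the power graph:
`⟨x, y⟩` is cyclic but neither of `x`, `y` is a power of the other. -/
def diffAdj {G : Type*} [Group G] (x y : G) : Prop :=
  IsCyclic (Subgroup.closure ({x, y} : Set G)) ∧
    (¬ ∃ k : ℤ, y = x ^ k) ∧ (¬ ∃ k : ℤ, x = y ^ k)

/-- The vertex set of the difference graph `𝒟(G)`: the elements of `G` that are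
non-isolated in the difference of the enhanced power graph and the power graph. -/
abbrev DiffVertex (G : Type*) [Group G] := {x : G // ∃ y, diffAdj x y}

/-- The difference graph `𝒟(G)` of a group `G`. -/
def diffGraph (G : Type*) [Group G] : SimpleGraph (DiffVertex G) :=
  SimpleGraph.fromRel (fun a b => diffAdj a.val b.val)

/-- A dominating set of a graph: every vertex is in `S` or adjacent to a vertex of `S`. -/
def IsDominatingSet {V : Type*} (Γ : SimpleGraph V) (S : Set V) : Prop :=
  ∀ v : V, v ∈ S ∨ ∃ u ∈ S, Γ.Adj u v

/-- The domination number of a graph: the least size of a dominating set. -/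
noncomputable def dominationNumber {V : Type*} (Γ : SimpleGraph V) : ℕ :=
  sInf {n : ℕ | ∃ S : Set V, IsDominatingSet Γ S ∧ S.ncard = n}

/-- A maximal cyclic subgroup: a cyclic subgroup not properly contained in
another cyclic subgroup. -/
def IsMaxCyclic {G : Type*} [Group G] (C : Subgroup G) : Prop :=
  IsCyclic C ∧ ∀ D : Subgroup G, IsCyclic D → C ≤ D → C = D

/-!
In `Q₄ₘ`, every element `xaⁱ` outside the cyclic subgroup `⟨a⟩` generates a maximal cyclic
subgroup: a power of `aʲ` stays in `⟨a⟩`, as does an even power of `xaʲ`, while an odd power of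
`xaʲ` generates the same subgroup as `xaʲ`, because `(xaʲ)⁴ = 1`. If `⟨g⟩` is maximal cyclic and
`⟨g, h⟩` is cyclic, then `h` is a power of `g`, so `g` is isolated in the difference of the enhanced
power graph and the power graph. Hence all vertices of `𝒟(Q₄ₘ)` lie in `⟨a⟩ ≅ ℤ/2m`, and whether two
elements are adjacent is decided inside the subgroup they generate.
-/

section Group

variable {G H : Type*} [Group G] [Group H]

lemma diffAdj.symm {x y : G} (h : diffAdj x y) : diffAdj y x :=
  ⟨Set.pair_comm x y ▸ h.1, h.2.2, h.2.1⟩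

lemma diffAdj.ne {x y : G} (h : diffAdj x y) : x ≠ y := by
  rintro rfl
  exact h.2.1 ⟨1, (zpow_one x).symm⟩

lemma diffGraph_adj {u v : DiffVertex G} : (diffGraph G).Adj u v ↔ diffAdj u.val v.val := by
  rw [diffGraph, SimpleGraph.fromRel_adj]
  exact ⟨fun h => h.2.elim id diffAdj.symm, fun h => ⟨fun huv => h.ne (congrArg _ huv), .inl h⟩⟩

lemma diffAdj_map_iff {f : H →* G} (hf : Function.Injective f) {x y : H} :
    diffAdj (f x) (f y) ↔ diffAdj x y := by
  have closure_map : Subgroup.closure {f x, f y} = (Subgroup.closure {x, y}).map f := by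
    rw [MonoidHom.map_closure, Set.image_pair]
  have isCyclic_iff :
      IsCyclic (Subgroup.closure {f x, f y}) ↔ IsCyclic (Subgroup.closure {x, y}) := by
    rw [closure_map, ((Subgroup.closure {x, y}).equivMapOfInjective f hf).isCyclic]
  simp only [diffAdj, isCyclic_iff, ← map_zpow, hf.eq_iff]

/-- The embedding of difference graphs induced by an injective group homomorphism. -/
def diffGraphEmbedding (f : H →* G) (hf : Function.Injective f) :
    diffGraph H ↪g diffGraph G where
  toFun u := ⟨f u, u.2.imp' f fun _ => (diffAdj_map_iff hf).2⟩
  inj' _ _ huv := Subtype.ext (hf (congrArg Subtype.val huv))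
  map_rel_iff' := by
    intro u v
    rw [diffGraph_adj, diffGraph_adj]
    exact diffAdj_map_iff hf

lemma diffGraphEmbedding_surjective {f : H →* G} (hf : Function.Injective f)
    (hrange : ∀ x y : G, diffAdj x y → x ∈ f.range) :
    Function.Surjective (diffGraphEmbedding f hf) := by
  rintro ⟨x, y, hxy⟩
  obtain ⟨x, rfl⟩ := hrange x y hxy
  obtain ⟨y, rfl⟩ := hrange y (f x) hxy.symm
  exact ⟨⟨x, y, (diffAdj_map_iff hf).1 hxy⟩, rfl⟩

lemma IsMaxCyclic.not_diffAdj {x : G} (hx : IsMaxCyclic (Subgroup.zpowers x)) (y : G) :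
    ¬ diffAdj x y := by
  rintro ⟨hcyclic, hpow, -⟩
  have hle : Subgroup.zpowers x ≤ Subgroup.closure {x, y} :=
    Subgroup.zpowers_le_of_mem (Subgroup.subset_closure (Set.mem_insert x {y}))
  have hy : y ∈ Subgroup.zpowers x := by
    rw [hx.2 _ hcyclic hle]
    exact Subgroup.subset_closure (Set.mem_insert_of_mem x rfl)
  obtain ⟨k, rfl⟩ := hy
  exact hpow ⟨k, rfl⟩

lemma zpowers_zpow_eq_of_isCoprime {g : G} {n : ℕ} (hg : g ^ n = 1) {k : ℤ}
    (hk : IsCoprime k n) : Subgroup.zpowers (g ^ k) = Subgroup.zpowers g := by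
  have horder : IsCoprime k (orderOf g) :=
    hk.of_isCoprime_of_dvd_right (Int.natCast_dvd_natCast.2 (orderOf_dvd_of_pow_eq_one hg))
  have hmem : g ∈ Subgroup.zpowers (g ^ k) :=
    mem_zpowers_zpow_iff.2 (Int.isCoprime_iff_gcd_eq_one.1 horder)
  exact le_antisymm (Subgroup.zpowers_le_of_mem ⟨k, rfl⟩) (Subgroup.zpowers_le_of_mem hmem)

end Group

section Quaternion

open QuaternionGroup

variable (m : ℕ)

/-- The inclusion `i ↦ aⁱ` of the cyclic subgroup of index two in the quaternion group. -/
def cyclicToQuaternion : Multiplicative (ZMod (2 * m)) →* QuaternionGroup m where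
  toFun i := a i.toAdd
  map_one' := rfl
  map_mul' _ _ := rfl

lemma cyclicToQuaternion_injective : Function.Injective (cyclicToQuaternion m) :=
  fun _ _ hij => a.inj hij

variable {m}

lemma a_mem_range_cyclicToQuaternion (i : ZMod (2 * m)) :
    a i ∈ (cyclicToQuaternion m).range :=
  ⟨Multiplicative.ofAdd i, rfl⟩

lemma xa_notMem_range_cyclicToQuaternion (i : ZMod (2 * m)) :
    xa i ∉ (cyclicToQuaternion m).range := by
  rintro ⟨j, hj⟩
  cases hj

lemma xa_zpow_mem_range_cyclicToQuaternion_of_even (i : ZMod (2 * m)) {k : ℤ} (hk : Even k) :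
    xa i ^ k ∈ (cyclicToQuaternion m).range := by
  obtain ⟨l, rfl⟩ := hk.two_dvd
  rw [zpow_mul, zpow_ofNat, xa_sq]
  exact zpow_mem (a_mem_range_cyclicToQuaternion _) l

lemma isMaxCyclic_zpowers_xa (i : ZMod (2 * m)) :
    IsMaxCyclic (Subgroup.zpowers (xa i)) := by
  refine ⟨inferInstance, fun D hD hle => ?_⟩
  obtain ⟨g, rfl⟩ := (Subgroup.isCyclic_iff_exists_zpowers_eq_top D).1 hD
  obtain ⟨k, hk : g ^ k = xa i⟩ := Subgroup.zpowers_le.1 hle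
  rcases g with j | j
  · have hmem : a j ^ k ∈ (cyclicToQuaternion m).range :=
      zpow_mem (a_mem_range_cyclicToQuaternion j) k
    exact absurd (hk ▸ hmem) (xa_notMem_range_cyclicToQuaternion i)
  · have hodd : Odd k := by
      by_contra hk_odd
      have hmem : xa j ^ k ∈ (cyclicToQuaternion m).range :=
        xa_zpow_mem_range_cyclicToQuaternion_of_even j (Int.not_odd_iff_even.1 hk_odd)
      exact xa_notMem_range_cyclicToQuaternion i (hk ▸ hmem)
    have hcoprime : IsCoprime k (4 : ℕ) := (Int.isCoprime_two_right.2 hodd).pow_right (n := 2)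
    rw [← hk, zpowers_zpow_eq_of_isCoprime (xa_pow_four j) hcoprime]

lemma mem_range_cyclicToQuaternion_of_diffAdj (x y : QuaternionGroup m) (hxy : diffAdj x y) :
    x ∈ (cyclicToQuaternion m).range := by
  rcases x with i | i
  · exact a_mem_range_cyclicToQuaternion i
  · exact absurd hxy ((isMaxCyclic_zpowers_xa i).not_diffAdj y)

end Quaternion

/-- For `m = 0` the two groups are the infinite dihedral group and `ℤ`. -/
theorem quaternion_diffGraph_iso_cyclic_general (m : ℕ) :
    Nonempty (diffGraph (QuaternionGroup m) ≃g diffGraph (Multiplicative (ZMod (2 * m)))) :=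
  ⟨(RelIso.ofSurjective (diffGraphEmbedding (cyclicToQuaternion m) (cyclicToQuaternion_injective m))
    (diffGraphEmbedding_surjective _ mem_range_cyclicToQuaternion_of_diffAdj)).symm⟩

/-- For `m ≥ 2` not a power of `2`, the difference graph of the generalized quaternion
(dicyclic) group of order `4m` is isomorphic to the difference graph of the cyclic group
of order `2m`. -/
theorem quaternion_diffGraph_iso_cyclic
    (m : ℕ) (hm : 2 ≤ m) (h2 : ¬ ∃ k : ℕ, m = 2 ^ k) :
    Nonempty (diffGraph (QuaternionGroup m) ≃g diffGraph (Multiplicative (ZMod (2 * m)))) :=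
  quaternion_diffGraph_iso_cyclic_general m
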